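/- If X is a metric space and D is an upper semi-continuous decomposition of X, then the decomposition space X_D is metrizable; moreover, if X is separable then X_D is separable. -/

import Mathlib

/-!
Push the entourages of `X` forward along the quotient map `f`. The resulting relations on `X_D` are
symmetric, and since `f` is closed with compact fibres, the points related to `y` form a
neighbourhood basis of `y`. They need not satisfy a uniform triangle inequality, but they satisfy a
local one: if `z` is close enough to `y`, then the whole fibre over `z` lies near the fibre over
`y`, so that a short jump out of the fibre over `z` still lands near the fibre over `y`. By Frink's
argument a countable family of such relations suffices for metrizability: passing at every point to
a fast subsequence of its neighbourhoods `V k y`, the relations "`x` and `y` lie in a common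
`V k w`" generate a uniformity.
-/

open Set Filter Topology UniformSpace TopologicalSpace
open scoped SetRel Uniformity

section Metrization

variable {Y : Type*} [TopologicalSpace Y]

theorem pseudoMetrizableSpace_of_comp_subset {E : ℕ → SetRel Y Y} [∀ k, (E k).IsRefl]
    [∀ k, (E k).IsSymm] (hcomp : ∀ k, E (k + 1) ○ E (k + 1) ⊆ E k)
    (hnhds : ∀ y, (𝓝 y).HasBasis (fun _ ↦ True) fun k ↦ ball y (E k)) :
    PseudoMetrizableSpace Y := by
  have hanti : Antitone E :=
    antitone_nat_of_succ_le fun k ↦ SetRel.left_subset_comp.trans (hcomp k)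
  have hbasis : (⨅ k, 𝓟 (E k)).HasBasis (fun _ ↦ True) E :=
    (HasAntitoneBasis.iInf_principal hanti).toHasBasis
  let core : UniformSpace.Core Y :=
    { uniformity := ⨅ k, 𝓟 (E k)
      refl := hbasis.ge_iff.2 fun k _ ↦ SetRel.id_subset (R := E k)
      symm := (hbasis.tendsto_iff hbasis).2 fun k _ ↦ ⟨k, trivial, fun _ h ↦ (E k).symm h⟩
      comp := ((hbasis.lift' (monotone_id.relComp monotone_id)).le_basis_iff hbasis).2
        fun k _ ↦ ⟨k + 1, trivial, hcomp k⟩ }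
  let _ : UniformSpace Y := .ofCoreEq core inferInstance <| TopologicalSpace.ext_nhds fun y ↦ by
    rw [core.nhds_toTopologicalSpace]
    exact (hnhds y).eq_of_same_basis (hbasis.comap (Prod.mk y))
  have : IsCountablyGenerated (𝓤 Y) :=
    (HasAntitoneBasis.iInf_principal hanti).isCountablyGenerated
  exact UniformSpace.pseudoMetrizableSpace

/-- The hypothesis of Frink's metrization theorem on a sequence of neighbourhoods `U n y` of each
point `y`. The index `m` below may depend on `y`, so the condition is weaker than uniformity. -/
structure IsFrinkSystem (U : ℕ → Y → Set Y) : Prop where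
  hasAntitoneBasis (y : Y) : (𝓝 y).HasAntitoneBasis (U · y)
  exists_subset (y : Y) (n : ℕ) : ∃ m, ∀ z, (U m z ∩ U m y).Nonempty → U m z ⊆ U n y

namespace IsFrinkSystem

variable {U : ℕ → Y → Set Y}

theorem mem_self (hU : IsFrinkSystem U) (n : ℕ) (y : Y) : y ∈ U n y :=
  mem_of_mem_nhds ((hU.hasAntitoneBasis y).mem n)

theorem exists_forall_ge_subset (hU : IsFrinkSystem U) (y : Y) (n : ℕ) :
    ∃ m, ∀ z, ∀ p ≥ m, ∀ q ≥ m, (U p z ∩ U q y).Nonempty → U p z ⊆ U n y := by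
  obtain ⟨m, hm⟩ := hU.exists_subset y n
  refine ⟨m, fun z p hp q hq hmeet ↦ ?_⟩
  have hpz : U p z ⊆ U m z := (hU.hasAntitoneBasis z).antitone hp
  have hqy : U q y ⊆ U m y := (hU.hasAntitoneBasis y).antitone hq
  exact hpz.trans (hm z (hmeet.mono (inter_subset_inter hpz hqy)))

theorem exists_subset_or_subset (hU : IsFrinkSystem U) :
    ∃ V : ℕ → Y → Set Y, IsFrinkSystem V ∧ ∀ k x y, (V (k + 1) x ∩ V (k + 1) y).Nonempty →
      V (k + 1) x ⊆ V k y ∨ V (k + 1) y ⊆ V k x := by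
  choose m hm using hU.exists_forall_ge_subset
  choose N hN hmN hbasis using fun y ↦
    (hU.hasAntitoneBasis y).subbasis_with_rel fun p ↦ eventually_ge_atTop (m y p)
  have subset_of_le {k : ℕ} {x y : Y} (hle : N y (k + 1) ≤ N x (k + 1))
      (hmeet : (U (N x (k + 1)) x ∩ U (N y (k + 1)) y).Nonempty) :
      U (N x (k + 1)) x ⊆ U (N y k) y :=
    have hmNy : m y (N y k) ≤ N y (k + 1) := hmN y k.lt_succ_self
    hm y (N y k) x _ (hmNy.trans hle) _ hmNy hmeet
  refine ⟨fun k y ↦ U (N y k) y, ⟨hbasis, fun y n ↦ ⟨m y (N y n), fun z ↦ ?_⟩⟩,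
    fun k x y hmeet ↦ ?_⟩
  · exact hm y (N y n) z _ (hN z).le_apply _ (hN y).le_apply
  · exact (le_total (N y (k + 1)) (N x (k + 1))).imp (subset_of_le · hmeet)
      (subset_of_le · (inter_comm _ _ ▸ hmeet))

theorem pseudoMetrizableSpace (hU : IsFrinkSystem U) : PseudoMetrizableSpace Y := by
  obtain ⟨V, hV, hnested⟩ := hU.exists_subset_or_subset
  have hanti (w : Y) : Antitone (V · w) := (hV.hasAntitoneBasis w).antitone
  let E (k : ℕ) : SetRel Y Y := {p | ∃ w, p.1 ∈ V k w ∧ p.2 ∈ V k w}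
  have (k : ℕ) : (E k).IsRefl := ⟨fun y ↦ ⟨y, hV.mem_self k y, hV.mem_self k y⟩⟩
  have (k : ℕ) : (E k).IsSymm := ⟨fun _ _ ⟨w, hx, hy⟩ ↦ ⟨w, hy, hx⟩⟩
  refine pseudoMetrizableSpace_of_comp_subset (E := E) ?_ fun y ↦ ?_
  · rintro k ⟨x, z⟩ ⟨y, ⟨v, hxv, hyv⟩, ⟨w, hyw, hzw⟩⟩
    obtain hvw | hwv := hnested k v w ⟨y, hyv, hyw⟩
    · exact ⟨w, hvw hxv, hanti w k.le_succ hzw⟩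
    · exact ⟨v, hanti v k.le_succ hxv, hwv hzw⟩
  · refine (hV.hasAntitoneBasis y).toHasBasis.to_hasBasis (fun n _ ↦ ?_) fun k _ ↦
      ⟨k, trivial, fun z hz ↦ ⟨y, hV.mem_self k y, hz⟩⟩
    obtain ⟨m, hm⟩ := hV.exists_subset y n
    exact ⟨m, trivial, fun z ⟨w, hyw, hzw⟩ ↦ hm w ⟨y, hyw, hV.mem_self m y⟩ hzw⟩

theorem of_ball {D : ℕ → SetRel Y Y} [∀ n, (D n).IsSymm]
    (hbasis : ∀ y, (𝓝 y).HasAntitoneBasis fun n ↦ ball y (D n))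
    (hcomp : ∀ y n, ∃ m, ball y (D m ○ D m) ⊆ ball y (D n)) :
    IsFrinkSystem fun n y ↦ ball y (D n) := by
  refine ⟨hbasis, fun y n ↦ ?_⟩
  obtain ⟨k, hk⟩ := hcomp y n
  obtain ⟨l, hl⟩ := hcomp y k
  refine ⟨max k l, fun z ⟨w, hzw, hyw⟩ v hzv ↦ ?_⟩
  have hyz : z ∈ ball y (D k) :=
    hl ⟨w, (hbasis y).antitone (le_max_right k l) hyw,
      (D l).symm ((hbasis z).antitone (le_max_right k l) hzw)⟩
  exact hk ⟨z, hyz, (hbasis z).antitone (le_max_left k l) hzv⟩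

end IsFrinkSystem

end Metrization

section ProperMap

theorem ball_image_prodMap {X Y : Type*} (f : X → Y) (W : SetRel X X) (y : Y) :
    ball y (Prod.map f f '' W) = f '' ⋃ x ∈ f ⁻¹' {y}, ball x W := by
  ext z
  simp only [ball, mem_preimage, mem_image, Prod.exists, Prod.map_apply, Prod.mk.injEq, mem_iUnion,
    mem_singleton_iff, exists_prop]
  grind

variable {X Y : Type*} [TopologicalSpace Y] {f : X → Y}

section Fibers

variable [UniformSpace X] {ι : Sort*} {p : ι → Prop} {W : ι → SetRel X X}

theorem hasBasis_comap_nhds_iUnion_ball (hf : IsProperMap f) (hW : (𝓤 X).HasBasis p W) (y : Y) :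
    (comap f (𝓝 y)).HasBasis p fun i ↦ ⋃ x ∈ f ⁻¹' {y}, ball x (W i) := by
  rw [hf.isClosedMap.comap_nhds_eq hf.continuous]
  exact (hf.isCompact_preimage isCompact_singleton).nhdsSet_basis_uniformity hW

theorem hasBasis_nhds_ball_image (hf : IsProperMap f) (hsurj : f.Surjective)
    (hW : (𝓤 X).HasBasis p W) (y : Y) :
    (𝓝 y).HasBasis p fun i ↦ ball y (Prod.map f f '' W i) := by
  simpa only [map_comap_of_surjective hsurj, ball_image_prodMap] using
    (hasBasis_comap_nhds_iUnion_ball hf hW y).map f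

theorem exists_ball_comp_image_subset (hf : IsProperMap f) (y : Y) {S : SetRel X X}
    (hS : S ∈ 𝓤 X) :
    ∃ R ∈ 𝓤 X, ball y ((Prod.map f f '' R) ○ (Prod.map f f '' R)) ⊆
      ball y (Prod.map f f '' S) := by
  have hbasis := hasBasis_comap_nhds_iUnion_ball hf (𝓤 X).basis_sets y
  obtain ⟨P, hP, hPS⟩ := comp_mem_uniformity_sets hS
  obtain ⟨t, ht, htP⟩ : ∃ t ∈ 𝓝 y, f ⁻¹' t ⊆ ⋃ x ∈ f ⁻¹' {y}, ball x P :=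
    mem_comap.1 (hbasis.mem_of_mem hP)
  obtain ⟨Q, hQ, hQt⟩ : ∃ Q ∈ 𝓤 X, ⋃ x ∈ f ⁻¹' {y}, ball x Q ⊆ f ⁻¹' t :=
    hbasis.mem_iff.1 (preimage_mem_comap ht)
  refine ⟨P ∩ Q, inter_mem hP hQ, ?_⟩
  rintro _ ⟨_, ⟨⟨x, x'⟩, ⟨-, hxx'⟩, hx⟩, ⟨⟨a, b⟩, ⟨hab, -⟩, hb⟩⟩
  obtain ⟨hxy, rfl⟩ := Prod.mk.inj hx
  obtain ⟨hax', rfl⟩ := Prod.mk.inj hb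
  have hat : f a ∈ t := hax' ▸ hQt (mem_biUnion hxy hxx')
  obtain ⟨c, hcy, hca⟩ := mem_iUnion₂.1 (htP hat)
  exact ⟨(c, b), hPS ⟨a, hca, hab⟩, congrArg (·, f b) hcy⟩

end Fibers

theorem pseudoMetrizableSpace_of_isProperMap [TopologicalSpace X] [PseudoMetrizableSpace X]
    (hf : IsProperMap f) (hsurj : f.Surjective) : PseudoMetrizableSpace Y := by
  let := pseudoMetrizableSpaceUniformity X
  have := pseudoMetrizableSpaceUniformity_countably_generated X
  obtain ⟨W, hW, hWsymm⟩ := has_seq_basis X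
  let D (n : ℕ) : SetRel Y Y := Prod.map f f '' W n
  have hDanti : Antitone D := fun _ _ h ↦ image_mono (hW.antitone h)
  have hDbasis (y : Y) : (𝓝 y).HasAntitoneBasis fun n ↦ ball y (D n) :=
    ⟨hasBasis_nhds_ball_image hf hsurj hW.toHasBasis y, fun _ _ h ↦ preimage_mono (hDanti h)⟩
  have hDcomp (y : Y) (n : ℕ) : ∃ m, ball y (D m ○ D m) ⊆ ball y (D n) := by
    obtain ⟨R, hR, hRn⟩ := exists_ball_comp_image_subset hf y (hW.mem n)
    obtain ⟨m, hm⟩ := hW.mem_iff.1 hR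
    have hDR : D m ⊆ Prod.map f f '' R := image_mono hm
    exact ⟨m, (preimage_mono (SetRel.comp_subset_comp hDR hDR)).trans hRn⟩
  exact (IsFrinkSystem.of_ball hDbasis hDcomp).pseudoMetrizableSpace

theorem t1Space_of_isClosedMap [TopologicalSpace X] [T1Space X] (hf : IsClosedMap f)
    (hsurj : f.Surjective) : T1Space Y :=
  ⟨hsurj.forall.2 fun x ↦ by simpa using hf _ (isClosed_singleton (x := x))⟩

theorem metrizableSpace_of_isProperMap [TopologicalSpace X] [MetrizableSpace X]
    (hf : IsProperMap f) (hsurj : f.Surjective) : MetrizableSpace Y :=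
  have := t1Space_of_isClosedMap hf.isClosedMap hsurj
  have := pseudoMetrizableSpace_of_isProperMap hf hsurj
  inferInstance

end ProperMap

/-- If `X` is a metric space and `s` an upper semi-continuous decomposition of `X`
(compact elements, closed quotient map), then the decomposition space is metrizable;
moreover if `X` is separable then so is the decomposition space. -/
theorem decomposition_space_metrizable {X : Type*} [MetricSpace X] (s : Setoid X)
    (hcompact : ∀ x : X, IsCompact {y : X | s.r x y})
    (hclosedmap : IsClosedMap (Quotient.mk s)) :
    TopologicalSpace.MetrizableSpace (Quotient s) ∧
      (TopologicalSpace.SeparableSpace X → TopologicalSpace.SeparableSpace (Quotient s)) := by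
  have hfiber (x : X) : Quotient.mk s ⁻¹' {Quotient.mk s x} = {y | s.r x y} := by
    ext y
    exact Quotient.eq.trans ⟨s.symm, s.symm⟩
  have hproper : IsProperMap (Quotient.mk s) :=
    isProperMap_iff_isClosedMap_and_compact_fibers.2
      ⟨continuous_quotient_mk', hclosedmap,
        Quotient.mk_surjective.forall.2 fun x ↦ hfiber x ▸ hcompact x⟩
  exact ⟨metrizableSpace_of_isProperMap hproper Quotient.mk_surjective, fun _ ↦ inferInstance⟩
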